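/- In the notation of the context, let γ ∈ Δ_i be any imaginary root for θ (not necessarily simple). Then m_ε(s_γ) = ε(γ) · m_γ in M_θ, where m_ε(s_γ) is computed from any reduced expression of the reflection s_γ as a product of reflections in elements of Π_i, and m_γ is the image of π(γ∨) in M_θ. -/

import Mathlib

open scoped RealInnerProductSpace

set_option synthInstance.maxHeartbeats 1000000

noncomputable section

abbrev EucB (n : ℕ) := EuclideanSpace ℝ (Fin n)

def eB (n : ℕ) (i : Fin n) : EucB n := EuclideanSpace.single i (1 : ℝ)

def DeltaB (n : ℕ) : Set (EucB n) :=
  {v | (∃ i j : Fin n, i < j ∧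
          (v = eB n i + eB n j ∨ v = eB n i - eB n j ∨
           v = -eB n i + eB n j ∨ v = -eB n i - eB n j)) ∨
        ∃ i : Fin n, v = eB n i ∨ v = -eB n i}

def DeltaBpos (n : ℕ) : Set (EucB n) :=
  {v | (∃ i j : Fin n, i < j ∧ (v = eB n i + eB n j ∨ v = eB n i - eB n j)) ∨
        ∃ i : Fin n, v = eB n i}

def corootB (n : ℕ) (α : EucB n) : EucB n := (2 / ⟪α, α⟫) • α

def corootForm (n : ℕ) (α : EucB n) : Module.Dual ℝ (EucB n) where
  toFun x := ⟪x, corootB n α⟫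
  map_add' x y := inner_add_left _ _ _
  map_smul' c x := by simpa using real_inner_smul_left x (corootB n α) c

def sReflB (n : ℕ) (α : EucB n) : EucB n ≃ₗ[ℝ] EucB n :=
  if h : corootForm n α α = 2 then Module.reflection h else LinearEquiv.refl ℝ (EucB n)

def WeylB (n : ℕ) : Subgroup (EucB n ≃ₗ[ℝ] EucB n) :=
  Subgroup.closure {g | ∃ α ∈ DeltaB n, g = sReflB n α}

/-- The coroot lattice `Q∨`, the `ℤ`-span of the coroots. -/
def QvB (n : ℕ) : Submodule ℤ (EucB n) :=
  Submodule.span ℤ {v | ∃ α ∈ DeltaB n, v = corootB n α}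

/-- The submodule `2Q∨` of `Q∨`. -/
def twoQB (n : ℕ) : Submodule ℤ ↥(QvB n) :=
  LinearMap.range ((2 : ℤ) • (LinearMap.id : ↥(QvB n) →ₗ[ℤ] ↥(QvB n)))

/-- The quotient `Q∨/2Q∨`. -/
abbrev QModB (n : ℕ) := ↥(QvB n) ⧸ twoQB n

/-- The quotient map `π : Q∨ → Q∨/2Q∨`. -/
def piQ (n : ℕ) : ↥(QvB n) →ₗ[ℤ] QModB n := (twoQB n).mkQ

/-- The `θ`-fixed vectors of `Q∨`. -/
def fixedQ (n : ℕ) (θ : EucB n ≃ₗ[ℝ] EucB n) : Submodule ℤ ↥(QvB n) where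
  carrier := {v | θ (v : EucB n) = (v : EucB n)}
  add_mem' := by
    intro a b ha hb
    simp only [Set.mem_setOf_eq, Submodule.coe_add, map_add] at *
    rw [ha, hb]
  zero_mem' := by simp
  smul_mem' := by
    intro c a ha
    simp only [Set.mem_setOf_eq, Submodule.coe_smul, map_zsmul] at *
    rw [ha]

/-- The `θ`-antifixed vectors of `Q∨` (those with `θv = −v`). -/
def negQ (n : ℕ) (θ : EucB n ≃ₗ[ℝ] EucB n) : Submodule ℤ ↥(QvB n) where
  carrier := {v | θ (v : EucB n) = -(v : EucB n)}
  add_mem' := by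
    intro a b ha hb
    simp only [Set.mem_setOf_eq, Submodule.coe_add, map_add] at *
    rw [ha, hb]; abel
  zero_mem' := by simp
  smul_mem' := by
    intro c a ha
    simp only [Set.mem_setOf_eq, Submodule.coe_smul, map_zsmul] at *
    rw [ha, smul_neg]

/-- `A₋ = π({v ∈ Q∨ : θv = v})`. -/
def AmB (n : ℕ) (θ : EucB n ≃ₗ[ℝ] EucB n) : Submodule ℤ (QModB n) :=
  (fixedQ n θ).map (piQ n)

/-- `A₊ = π({v ∈ Q∨ : θv = −v})`. -/
def ApB (n : ℕ) (θ : EucB n ≃ₗ[ℝ] EucB n) : Submodule ℤ (QModB n) :=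
  (negQ n θ).map (piQ n)

/-- `M_θ = A₋/(A₋ ∩ A₊)`. -/
abbrev MthB (n : ℕ) (θ : EucB n ≃ₗ[ℝ] EucB n) :=
  ↥(AmB n θ) ⧸ (ApB n θ).comap (AmB n θ).subtype

open Classical in
/-- `m_β ∈ M_θ`, the class of `π(β∨)` (defined when `β∨ ∈ Q∨` is fixed by `θ`,
e.g. for `β` an imaginary root). -/
def mB (n : ℕ) (θ : EucB n ≃ₗ[ℝ] EucB n) (β : EucB n) : MthB n θ :=
  if h : corootB n β ∈ QvB n ∧ θ (corootB n β) = corootB n β then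
    Submodule.Quotient.mk
      ⟨piQ n ⟨corootB n β, h.1⟩,
        Submodule.mem_map_of_mem (p := fixedQ n θ) (by exact h.2)⟩
  else 0

/-- The imaginary roots of `θ` that are positive. -/
def ImPosB (n : ℕ) (θ : EucB n ≃ₗ[ℝ] EucB n) : Set (EucB n) :=
  {α | α ∈ DeltaBpos n ∧ θ α = α}

/-- The simple roots `Π_i` of the positive imaginary system: positive imaginary roots
that are not sums of two positive imaginary roots. -/
def SimpleImB (n : ℕ) (θ : EucB n ≃ₗ[ℝ] EucB n) : Set (EucB n) :=
  {β | β ∈ ImPosB n θ ∧ ¬∃ γ δ : EucB n, γ ∈ ImPosB n θ ∧ δ ∈ ImPosB n θ ∧ β = γ + δ}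

/-- The product `s_{β_N}⋯s_{β₁}` of the reflections of a word `(β₁, …, β_N)`. -/
def wordProdB (n : ℕ) (L : List (EucB n)) : EucB n ≃ₗ[ℝ] EucB n :=
  ((L.map (sReflB n)).reverse).prod

/-- `S(β₁,…,β_N) = ∑_j ε(s_{β₁}⋯s_{β_{j−1}}(β_j)) · m_{β_j}`, computed with an
accumulator recording the prefix product `s_{β₁}⋯s_{β_{j−1}}`. -/
def SwordB (n : ℕ) (θ : EucB n ≃ₗ[ℝ] EucB n) (ε : EucB n → ZMod 2) :
    (EucB n ≃ₗ[ℝ] EucB n) → List (EucB n) → MthB n θ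
  | _, [] => 0
  | acc, β :: rest =>
      (ε (acc β)).val • mB n θ β + SwordB n θ ε (acc * sReflB n β) rest

/-- Signed basis vectors. -/
def PB (n : ℕ) (v : EucB n) : Prop := ∃ i : Fin n, v = eB n i ∨ v = -eB n i

lemma eB_inner (n : ℕ) (i j : Fin n) : ⟪eB n i, eB n j⟫ = if i = j then (1 : ℝ) else 0 := by
  unfold eB
  rw [EuclideanSpace.inner_single_left]
  simp

lemma PB_neg {n : ℕ} {a : EucB n} (h : PB n a) : PB n (-a) := by
  obtain ⟨i, rfl | rfl⟩ := h
  · exact ⟨i, Or.inr rfl⟩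
  · exact ⟨i, Or.inl (neg_neg _)⟩

lemma PB_self {n : ℕ} {a : EucB n} (h : PB n a) : ⟪a, a⟫ = (1 : ℝ) := by
  obtain ⟨i, rfl | rfl⟩ := h <;>
    simp only [inner_neg_left, inner_neg_right, eB_inner, if_true, neg_neg]

lemma PB_tri {n : ℕ} {a c : EucB n} (h : PB n a) (h' : PB n c) :
    c = a ∨ c = -a ∨ ⟪c, a⟫ = (0 : ℝ) := by
  obtain ⟨i, rfl | rfl⟩ := h <;> obtain ⟨j, rfl | rfl⟩ := h' <;>
    by_cases hij : j = i <;>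
    simp [inner_neg_left, inner_neg_right, eB_inner, hij]

lemma DeltaB_iff {n : ℕ} (α : EucB n) : α ∈ DeltaB n ↔
    PB n α ∨ ∃ a b : EucB n, PB n a ∧ PB n b ∧ ⟪a, b⟫ = (0 : ℝ) ∧ α = a + b := by
  constructor
  · rintro (⟨i, j, hij, h⟩ | h)
    · right
      have h0 : ⟪eB n i, eB n j⟫ = (0 : ℝ) := by rw [eB_inner, if_neg hij.ne]
      rcases h with h | h | h | h
      · exact ⟨_, _, ⟨i, Or.inl rfl⟩, ⟨j, Or.inl rfl⟩, h0, h⟩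
      · exact ⟨_, _, ⟨i, Or.inl rfl⟩, ⟨j, Or.inr rfl⟩, by rw [inner_neg_right, h0, neg_zero],
          by rw [h, sub_eq_add_neg]⟩
      · exact ⟨_, _, ⟨i, Or.inr rfl⟩, ⟨j, Or.inl rfl⟩, by rw [inner_neg_left, h0, neg_zero], h⟩
      · exact ⟨_, _, ⟨i, Or.inr rfl⟩, ⟨j, Or.inr rfl⟩,
          by rw [inner_neg_left, inner_neg_right, h0, neg_zero, neg_zero],
          by rw [h, sub_eq_add_neg]⟩
    · exact Or.inl h
  · rintro (h | ⟨a, b, ⟨i, hi⟩, ⟨j, hj⟩, h0, rfl⟩)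
    · exact Or.inr h
    · left
      have hij : i ≠ j := by
        rintro rfl
        rcases hi with rfl | rfl <;> rcases hj with rfl | rfl <;>
          simp only [inner_neg_left, inner_neg_right, eB_inner, if_true] at h0 <;> norm_num at h0
      rcases lt_or_gt_of_ne hij with hlt | hlt
      · refine ⟨i, j, hlt, ?_⟩
        rcases hi with rfl | rfl <;> rcases hj with rfl | rfl <;> simp [sub_eq_add_neg]
      · refine ⟨j, i, hlt, ?_⟩
        rcases hi with rfl | rfl <;> rcases hj with rfl | rfl <;> simp [sub_eq_add_neg, add_comm]

lemma DeltaB_self_ne {n : ℕ} {α : EucB n} (h : α ∈ DeltaB n) : ⟪α, α⟫ ≠ (0 : ℝ) := by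
  rcases (DeltaB_iff α).1 h with h | ⟨a, b, ha, hb, h0, rfl⟩
  · rw [PB_self h]; norm_num
  · have h1 : ⟪b, a⟫ = (0 : ℝ) := by rw [real_inner_comm]; exact h0
    rw [inner_add_left, inner_add_right, inner_add_right, PB_self ha, PB_self hb, h0, h1]
    norm_num

lemma sReflB_apply {n : ℕ} {α : EucB n} (h : α ∈ DeltaB n) (x : EucB n) :
    sReflB n α x = x - (2 / ⟪α, α⟫ * ⟪α, x⟫) • α := by
  have h2 : corootForm n α α = 2 := by
    change ⟪α, corootB n α⟫ = (2 : ℝ)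
    unfold corootB
    rw [real_inner_smul_right, div_mul_cancel₀ _ (DeltaB_self_ne h)]
  unfold sReflB
  rw [dif_pos h2, Module.reflection_apply]
  change x - ⟪x, corootB n α⟫ • α = _
  unfold corootB
  rw [real_inner_smul_right, real_inner_comm α x]

lemma sub_sRefl {n : ℕ} {α : EucB n} (h : α ∈ DeltaB n) (x : EucB n) :
    x - sReflB n α x = ⟪α, x⟫ • corootB n α := by
  rw [sReflB_apply h, corootB, smul_smul, sub_sub_cancel, mul_comm]

lemma sReflB_inner {n : ℕ} {α : EucB n} (h : α ∈ DeltaB n) (x y : EucB n) :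
    ⟪x, sReflB n α y⟫ = ⟪sReflB n α x, y⟫ := by
  rw [sReflB_apply h, sReflB_apply h, inner_sub_left, inner_sub_right, real_inner_smul_left,
    real_inner_smul_right, real_inner_comm x α]
  ring

lemma sReflB_invol {n : ℕ} {α : EucB n} (h : α ∈ DeltaB n) (x : EucB n) :
    sReflB n α (sReflB n α x) = x := by
  have := DeltaB_self_ne h
  rw [sReflB_apply h (sReflB n α x), sReflB_apply h x, inner_sub_right, real_inner_smul_right,
    sub_sub, ← add_smul]
  have h0 : 2 / ⟪α, α⟫ * ⟪α, x⟫ + 2 / ⟪α, α⟫ * (⟪α, x⟫ - 2 / ⟪α, α⟫ * ⟪α, x⟫ * ⟪α, α⟫) = (0:ℝ) := by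
    field_simp
    ring
  rw [h0, zero_smul, sub_zero]

lemma sReflB_PB {n : ℕ} {α : EucB n} (h : α ∈ DeltaB n) {c : EucB n} (hc : PB n c) :
    PB n (sReflB n α c) := by
  rw [sReflB_apply h]
  rcases (DeltaB_iff α).1 h with h | ⟨a, b, ha, hb, h0, rfl⟩
  · rw [PB_self h]
    rcases PB_tri h hc with rfl | rfl | h1
    · rw [PB_self h]
      convert PB_neg h using 1
      module
    · rw [inner_neg_right, PB_self h]
      convert h using 1
      module
    · rw [real_inner_comm, h1]
      convert hc using 1
      module
  · have h1 : ⟪b, a⟫ = (0 : ℝ) := by rw [real_inner_comm]; exact h0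
    have hs : ⟪a + b, a + b⟫ = (2 : ℝ) := by
      rw [inner_add_left, inner_add_right, inner_add_right, PB_self ha, PB_self hb, h0, h1]
      norm_num
    rw [hs, inner_add_left]
    rcases PB_tri ha hc with rfl | rfl | h2
    · rw [PB_self ha, h1]
      convert PB_neg hb using 1
      module
    · rw [inner_neg_right, inner_neg_right, PB_self ha, h1]
      convert hb using 1
      module
    · rcases PB_tri hb hc with rfl | rfl | h3
      · rw [PB_self hb, h0]
        convert PB_neg ha using 1
        module
      · rw [inner_neg_right, inner_neg_right, PB_self hb, h0]
        convert ha using 1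
        module
      · rw [real_inner_comm, h2, real_inner_comm, h3]
        convert hc using 1
        module

lemma sReflB_Delta {n : ℕ} {α : EucB n} (h : α ∈ DeltaB n) {c : EucB n} (hc : c ∈ DeltaB n) :
    sReflB n α c ∈ DeltaB n := by
  rw [DeltaB_iff] at hc ⊢
  rcases hc with hc | ⟨a, b, ha, hb, h0, rfl⟩
  · exact Or.inl (sReflB_PB h hc)
  · right
    refine ⟨_, _, sReflB_PB h ha, sReflB_PB h hb, ?_, map_add _ _ _⟩
    rw [sReflB_inner h, sReflB_invol h, h0]

lemma WeylB_PB {n : ℕ} {g : EucB n ≃ₗ[ℝ] EucB n} (hg : g ∈ WeylB n) :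
    ∀ c, PB n c → PB n (g c) := by
  -- every generator is its own inverse
  unfold WeylB at hg
  induction hg using Subgroup.closure_induction'' with
  | one => intro c hc; exact hc
  | mem x hx =>
    obtain ⟨α, hα, rfl⟩ := hx
    intro c hc
    exact sReflB_PB hα hc
  | inv_mem x hx =>
    obtain ⟨α, hα, rfl⟩ := hx
    intro c hc
    have : (sReflB n α)⁻¹ c = sReflB n α c := by
      change (sReflB n α).symm c = _
      rw [LinearEquiv.symm_apply_eq, sReflB_invol hα]
    rw [this]
    exact sReflB_PB hα hc
  | mul x y _ _ hx hy => intro c hc; exact hx _ (hy c hc)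

lemma sRefl_fixed {n : ℕ} {θ : EucB n ≃ₗ[ℝ] EucB n} {α : EucB n} (h : α ∈ DeltaB n)
    (hα : θ α = α) {c : EucB n} (hc : θ c = c) : θ (sReflB n α c) = sReflB n α c := by
  rw [sReflB_apply h, map_sub, map_smul, hα, hc]

/-- The class map from fixed vectors of the coroot lattice. -/
def phiB (n : ℕ) (θ : EucB n ≃ₗ[ℝ] EucB n) : ↥(fixedQ n θ) →ₗ[ℤ] MthB n θ :=
  ((ApB n θ).comap (AmB n θ).subtype).mkQ ∘ₗ
    ((piQ n).restrict (p := fixedQ n θ) (q := AmB n θ)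
      (fun _ hv => Submodule.mem_map_of_mem hv))

lemma corootB_mem {n : ℕ} {α : EucB n} (h : α ∈ DeltaB n) : corootB n α ∈ QvB n :=
  Submodule.subset_span ⟨α, h, rfl⟩

lemma corootB_fixed {n : ℕ} {θ : EucB n ≃ₗ[ℝ] EucB n} {α : EucB n} (h : θ α = α) :
    θ (corootB n α) = corootB n α := by
  rw [corootB, map_smul, h]

lemma mB_eq {n : ℕ} {θ : EucB n ≃ₗ[ℝ] EucB n} {α : EucB n} (h : α ∈ DeltaB n) (h' : θ α = α) :
    mB n θ α = phiB n θ ⟨⟨corootB n α, corootB_mem h⟩, corootB_fixed h'⟩ := by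
  unfold mB
  rw [dif_pos ⟨corootB_mem h, corootB_fixed h'⟩]
  rfl

lemma two_phiB {n : ℕ} {θ : EucB n ≃ₗ[ℝ] EucB n} (v : fixedQ n θ) : (2 : ℤ) • phiB n θ v = 0 := by
  have h : (piQ n).restrict (p := fixedQ n θ) (q := AmB n θ)
      (fun _ hv => Submodule.mem_map_of_mem hv) ((2 : ℤ) • v) = 0 := by
    apply Subtype.ext
    change piQ n ((2 : ℤ) • (v : QvB n)) = 0
    unfold piQ
    rw [Submodule.mkQ_apply, Submodule.Quotient.mk_eq_zero]
    exact ⟨(v : QvB n), rfl⟩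
  rw [← map_smul]
  unfold phiB
  rw [LinearMap.comp_apply, h, map_zero]

lemma smul_phiB {n : ℕ} {θ : EucB n ≃ₗ[ℝ] EucB n} (v : fixedQ n θ) (k : ℤ) (e : ZMod 2)
    (h : (k : ZMod 2) = e) : e.val • phiB n θ v = k • phiB n θ v := by
  have h1 : ((k - (e.val : ℤ) : ℤ) : ZMod 2) = 0 := by
    push_cast
    rw [ZMod.natCast_zmod_val, h, sub_self]
  obtain ⟨m, hm⟩ := (ZMod.intCast_zmod_eq_zero_iff_dvd _ 2).1 h1
  have h2 : k = m * 2 + (e.val : ℤ) := by push_cast at hm; linarith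
  rw [h2, add_smul, mul_smul, two_phiB, smul_zero, zero_add, natCast_zsmul]

lemma Sword_eq {n : ℕ} {θ : EucB n ≃ₗ[ℝ] EucB n} (ε : EucB n → ZMod 2) (L : List (EucB n)) :
    ∀ (acc : EucB n ≃ₗ[ℝ] EucB n) (y : EucB n),
    (∀ β ∈ L, β ∈ DeltaB n ∧ θ β = β) →
    (∀ α, α ∈ DeltaB n → θ α = α → ∃ k : ℤ, ⟪α, y⟫ = (k : ℝ) ∧ (k : ZMod 2) = ε (acc α)) →
    ∃ v : fixedQ n θ, ((v : QvB n) : EucB n) = y - wordProdB n L y ∧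
      SwordB n θ ε acc L = phiB n θ v := by
  induction L with
  | nil =>
    intro acc y _ _
    refine ⟨0, ?_, ?_⟩
    · simp [wordProdB]
    · rw [map_zero]; rfl
  | cons β rest ih =>
    intro acc y hL hy
    obtain ⟨hβ, hβ'⟩ := hL β (by simp)
    obtain ⟨k, hk, hkε⟩ := hy β hβ hβ'
    obtain ⟨v, hv, hS⟩ := ih (acc * sReflB n β) (sReflB n β y)
      (fun b hb => hL b (List.mem_cons_of_mem _ hb)) (by
        intro α hα hα'
        obtain ⟨m, hm, hmε⟩ := hy (sReflB n β α) (sReflB_Delta hβ hα) (sRefl_fixed hβ hβ' hα')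
        exact ⟨m, by rw [sReflB_inner hβ, hm], hmε⟩)
    refine ⟨k • ⟨⟨corootB n β, corootB_mem hβ⟩, corootB_fixed hβ'⟩ + v, ?_, ?_⟩
    · have hw : wordProdB n (β :: rest) y = wordProdB n rest (sReflB n β y) := by
        simp [wordProdB]
      have h1 := sub_sRefl hβ y
      rw [hk, Int.cast_smul_eq_zsmul] at h1
      change k • corootB n β + ((v : QvB n) : EucB n) = _
      rw [hw, hv, ← h1]
      abel
    · rw [SwordB, hS, map_add, map_smul, mB_eq hβ hβ', smul_phiB _ k _ hkε]

open Classical in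
/-- Coordinates of a vector representing the grading. -/
def xcB (n : ℕ) (θ : EucB n ≃ₗ[ℝ] EucB n) (ε : EucB n → ZMod 2) (i : Fin n) : ℤ :=
  if θ (eB n i) = eB n i then ((ε (eB n i)).val : ℤ)
  else if ∃ j, i < j ∧ (θ (eB n i) = eB n j ∨ θ (eB n i) = -eB n j) then
    ((ε (eB n i + θ (eB n i))).val : ℤ)
  else 0

lemma eB_ne_neg {n : ℕ} (i j : Fin n) : eB n i ≠ - eB n j := by
  intro h
  have := congrArg (fun v => ⟪eB n i, v⟫) h
  simp only [inner_neg_right, eB_inner] at this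
  split_ifs at this <;> norm_num at this

lemma eB_inj {n : ℕ} {i j : Fin n} (h : eB n i = eB n j) : i = j := by
  by_contra hne
  have := congrArg (fun v => ⟪eB n i, v⟫) h
  simp only [eB_inner, if_true, if_neg hne] at this
  norm_num at this

/-- If a sum of two signed basis vectors equals a sum of two orthogonal ones, they match. -/
lemma PB_match {n : ℕ} {a b c d : EucB n} (ha : PB n a) (hb : PB n b) (hc : PB n c)
    (hab : ⟪a, b⟫ = (0 : ℝ)) (h : c + d = a + b) : c = a ∨ c = b ∨ ⟪d, d⟫ ≠ (1 : ℝ) := by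
  have hba : ⟪b, a⟫ = (0 : ℝ) := by rw [real_inner_comm]; exact hab
  have hd : d = a + b - c := by rw [← h]; abel
  have hdd : ⟪d, d⟫ = 3 - 2 * ⟪c, a⟫ - 2 * ⟪c, b⟫ := by
    rw [hd]
    simp only [inner_sub_left, inner_sub_right, inner_add_left, inner_add_right,
      PB_self ha, PB_self hb, PB_self hc, hab, hba, real_inner_comm a c, real_inner_comm b c]
    ring
  rcases PB_tri ha hc with h1 | h1 | h1
  · exact Or.inl h1
  · right; right
    rw [hdd, h1, inner_neg_left, inner_neg_left, PB_self ha, hab]; norm_num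
  · rcases PB_tri hb hc with h2 | h2 | h2
    · exact Or.inr (Or.inl h2)
    · right; right
      rw [hdd, h2, inner_neg_left, inner_neg_left, PB_self hb, hba]; norm_num
    · right; right
      rw [hdd, h1, h2]; norm_num

lemma exists_x {n : ℕ} {θ : EucB n ≃ₗ[ℝ] EucB n} (hθW : θ ∈ WeylB n)
    (hθ2 : θ * θ = 1) (ε : EucB n → ZMod 2)
    (hε1 : ∀ α, α ∈ DeltaB n → θ α = α → ε (-α) = ε α)
    (hε2 : ∀ α β : EucB n, α ∈ DeltaB n → θ α = α → β ∈ DeltaB n → θ β = β →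
      α + β ∈ DeltaB n → ε (α + β) = ε α + ε β) :
    ∃ x : EucB n, ∀ α, α ∈ DeltaB n → θ α = α →
      ∃ k : ℤ, ⟪α, x⟫ = (k : ℝ) ∧ (k : ZMod 2) = ε α := by
  have hθθ : ∀ v, θ (θ v) = v := fun v => by
    have := congrArg (fun f => f v) hθ2
    exact this
  let x : EucB n := WithLp.toLp 2 (fun i => (xcB n θ ε i : ℝ))
  have hx : ∀ i, ⟪eB n i, x⟫ = (xcB n θ ε i : ℝ) := by
    intro i
    unfold eB
    rw [EuclideanSpace.inner_single_left]
    simp [x]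
  refine ⟨x, ?_⟩
  have hmem : ∀ i, eB n i ∈ DeltaB n := fun i => Or.inr ⟨i, Or.inl rfl⟩
  have hmemn : ∀ i, -eB n i ∈ DeltaB n := fun i => Or.inr ⟨i, Or.inr rfl⟩
  have hP : ∀ i, PB n (eB n i) := fun i => ⟨i, Or.inl rfl⟩
  -- negation symmetric
  have hneg : ∀ α, α ∈ DeltaB n → θ α = α →
      (∃ k : ℤ, ⟪α, x⟫ = (k : ℝ) ∧ (k : ZMod 2) = ε α) →
      (∃ k : ℤ, ⟪-α, x⟫ = (k : ℝ) ∧ (k : ZMod 2) = ε (-α)) := by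
    rintro α hα hα' ⟨k, hk, hkε⟩
    refine ⟨-k, by rw [inner_neg_left, hk]; push_cast; rfl, ?_⟩
    rw [hε1 α hα hα', ← hkε]
    push_cast
    rw [CharTwo.neg_eq]
  have hsingle : ∀ i, θ (eB n i) = eB n i →
      ∃ k : ℤ, ⟪eB n i, x⟫ = (k : ℝ) ∧ (k : ZMod 2) = ε (eB n i) := by
    intro i hi
    refine ⟨xcB n θ ε i, hx i, ?_⟩
    unfold xcB
    rw [if_pos hi, Int.cast_natCast, ZMod.natCast_zmod_val]
  -- pairs
  have hpair : ∀ i j, i < j → ∀ b, (b = eB n j ∨ b = -eB n j) → eB n i + b ∈ DeltaB n →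
      θ (eB n i + b) = eB n i + b →
      ∃ k : ℤ, ⟪eB n i + b, x⟫ = (k : ℝ) ∧ (k : ZMod 2) = ε (eB n i + b) := by
    intro i j hij b hb hmemb hfix
    have hbP : PB n b := ⟨j, hb⟩
    have hbD : b ∈ DeltaB n := Or.inr hbP
    have h0 : ⟪eB n i, b⟫ = (0 : ℝ) := by
      rcases hb with rfl | rfl <;> simp [inner_neg_right, eB_inner, hij.ne]
    have hfix' := hfix
    rw [map_add] at hfix
    rcases PB_match (hP i) hbP (WeylB_PB hθW _ (hP i)) h0 hfix with h | h | h
    · have hbf : θ b = b := by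
        rw [h] at hfix; exact add_left_cancel hfix
      obtain ⟨k, hk, hkε⟩ := hsingle i h
      obtain ⟨m, hm, hmε⟩ : ∃ k : ℤ, ⟪b, x⟫ = (k : ℝ) ∧ (k : ZMod 2) = ε b := by
        rcases hb with rfl | rfl
        · exact hsingle j hbf
        · have : θ (eB n j) = eB n j := by
            rw [map_neg] at hbf; exact neg_injective hbf
          exact hneg _ (hmem j) this (hsingle j this)
      refine ⟨k + m, by rw [inner_add_left, hk, hm]; push_cast; rfl, ?_⟩
      rw [hε2 _ _ (hmem i) h hbD hbf hmemb, ← hkε, ← hmε]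
      push_cast; rfl
    · -- swapped
      have hne : θ (eB n i) ≠ eB n i := by
        rw [h]; rintro rfl
        rw [PB_self (hP i)] at h0; norm_num at h0
      have hxi : xcB n θ ε i = ((ε (eB n i + b)).val : ℤ) := by
        unfold xcB
        rw [if_neg hne, if_pos ⟨j, hij, by rw [h]; exact hb⟩, h]
      have hbi : θ b = eB n i := by rw [← h, hθθ]
      have hj : θ (eB n j) = eB n i ∨ θ (eB n j) = -eB n i := by
        rcases hb with rfl | rfl
        · exact Or.inl hbi
        · right; rw [map_neg] at hbi; rw [← hbi, neg_neg]
      have hxj : xcB n θ ε j = 0 := by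
        unfold xcB
        rw [if_neg, if_neg]
        · rintro ⟨k, hjk, hk⟩
          have hik : i ≠ k := (hij.trans hjk).ne
          rcases hj with hj | hj <;> rw [hj] at hk <;> rcases hk with hk | hk
          · exact hik (eB_inj hk)
          · exact eB_ne_neg _ _ hk
          · exact eB_ne_neg _ _ hk.symm
          · exact hik (eB_inj (neg_injective hk))
        · intro hk
          rcases hj with hj | hj <;> rw [hj] at hk
          · exact hij.ne (eB_inj hk)
          · exact eB_ne_neg _ _ hk.symm
      have hbx : ⟪b, x⟫ = (0 : ℝ) := by
        rcases hb with rfl | rfl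
        · rw [hx, hxj, Int.cast_zero]
        · rw [inner_neg_left, hx, hxj, Int.cast_zero, neg_zero]
      refine ⟨xcB n θ ε i, by rw [inner_add_left, hbx, hx, add_zero], ?_⟩
      rw [hxi, Int.cast_natCast, ZMod.natCast_zmod_val]
    · exact absurd (PB_self (WeylB_PB hθW _ hbP)) h
  intro α hα hfix
  have key : ∀ i j, i < j → ∀ b, (b = eB n j ∨ b = -eB n j) →
      (α = eB n i + b ∨ α = -(eB n i + b)) →
      ∃ k : ℤ, ⟪α, x⟫ = (k : ℝ) ∧ (k : ZMod 2) = ε α := by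
    intro i j hij b hb h
    have hD : eB n i + b ∈ DeltaB n := by
      left
      refine ⟨i, j, hij, ?_⟩
      rcases hb with rfl | rfl
      · exact Or.inl rfl
      · exact Or.inr (Or.inl (sub_eq_add_neg _ _).symm)
    rcases h with rfl | rfl
    · exact hpair i j hij b hb hD hfix
    · have hf : θ (eB n i + b) = eB n i + b := by
        rw [map_neg] at hfix; exact neg_injective hfix
      exact hneg _ hD hf (hpair i j hij b hb hD hf)
  rcases hα with ⟨i, j, hij, h | h | h | h⟩ | ⟨i, h | h⟩
  · exact key i j hij _ (Or.inl rfl) (Or.inl h)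
  · exact key i j hij _ (Or.inr rfl) (Or.inl (by rw [h, sub_eq_add_neg]))
  · exact key i j hij _ (Or.inr rfl) (Or.inr (by rw [h]; abel))
  · exact key i j hij _ (Or.inl rfl) (Or.inr (by rw [h]; abel))
  · subst h; exact hsingle i hfix
  · subst h
    have hf : θ (eB n i) = eB n i := by
      rw [map_neg] at hfix; exact neg_injective hfix
    exact hneg _ (hmem i) hf (hsingle i hf)

/-- For any imaginary root `γ ∈ Δ_i` (not necessarily simple), `m_ε(s_γ) = ε(γ)·m_γ` in
`M_θ`: for any minimal-length word `L` in the simple imaginary roots `Π_i` whose product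
of reflections is `s_γ`, the value `S(L)` equals `ε(γ)·m_γ`. -/
theorem mEps_reflection (n : ℕ) (hn : 0 < n)
    (θ : EucB n ≃ₗ[ℝ] EucB n) (hθW : θ ∈ WeylB n) (hθ2 : θ * θ = 1)
    (ε : EucB n → ZMod 2)
    (hε1 : ∀ α, α ∈ DeltaB n → θ α = α → ε (-α) = ε α)
    (hε2 : ∀ α β : EucB n, α ∈ DeltaB n → θ α = α → β ∈ DeltaB n → θ β = β →
      α + β ∈ DeltaB n → ε (α + β) = ε α + ε β)
    (γ : EucB n) (hγ : γ ∈ DeltaB n) (hγim : θ γ = γ)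
    (L : List (EucB n)) (hL : ∀ β ∈ L, β ∈ SimpleImB n θ)
    (hLw : wordProdB n L = sReflB n γ)
    (hLmin : ∀ K : List (EucB n), (∀ β ∈ K, β ∈ SimpleImB n θ) →
      wordProdB n K = sReflB n γ → L.length ≤ K.length) :
    SwordB n θ ε 1 L = (ε γ).val • mB n θ γ := by
  obtain ⟨x, hx⟩ := exists_x hθW hθ2 ε hε1 hε2
  have hLD : ∀ β ∈ L, β ∈ DeltaB n ∧ θ β = β := by
    intro β hβ
    obtain ⟨⟨hpos, hfix⟩, -⟩ := hL β hβ
    refine ⟨?_, hfix⟩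
    rcases hpos with ⟨i, j, hij, h | h⟩ | ⟨i, h⟩
    · exact Or.inl ⟨i, j, hij, Or.inl h⟩
    · exact Or.inl ⟨i, j, hij, Or.inr (Or.inl h)⟩
    · exact Or.inr ⟨i, Or.inl h⟩
  obtain ⟨v, hv, hS⟩ := Sword_eq ε L 1 x hLD hx
  obtain ⟨k, hk, hkε⟩ := hx γ hγ hγim
  rw [hS, mB_eq hγ hγim, smul_phiB _ k _ hkε, ← map_smul]
  congr 1
  apply Subtype.ext
  apply Subtype.ext
  rw [hv, hLw, sub_sRefl hγ, hk, Int.cast_smul_eq_zsmul]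
  rfl
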